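/- For every sufficiently large positive integer N, R_N(SL) ≤ 34·N − 27·√N. -/

import Mathlib

/-- Weyl dimension (type A), 0-indexed, for `SL_{k+1}(ℂ)`. -/
def PA (k : ℕ) (a : Fin k → ℕ) : ℚ :=
  ∏ i ∈ Finset.range (k + 1), ∏ j ∈ Finset.range (k + 1),
    if i < j then
      ((∑ t ∈ Finset.Ico i j, if h : t < k then (a ⟨t, h⟩ : ℚ) else 0) / ((j : ℚ) - (i : ℚ)))
    else 1

/-- Pairs `(n, a)` counted by `R_N(SL)`: `n = k + 2 ≥ 2`, `a` a tuple of `k + 1` positive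
integers, nontrivial (some `a i ≥ 2`), dimension `≤ N`. -/
def SLSet (N : ℕ) : Set (Σ k : ℕ, Fin (k + 1) → ℕ) :=
  {p | (∀ i, 1 ≤ p.2 i) ∧ (∃ i, 2 ≤ p.2 i) ∧ PA (p.1 + 1) p.2 ≤ (N : ℚ)}

theorem one_le_prod_aux (n : ℕ) (f : ℕ → ℝ) (h : ∀ i ∈ Finset.range n, 1 ≤ f i) :
    1 ≤ ∏ i ∈ Finset.range n, f i := by
  have := Finset.prod_le_prod (s := Finset.range n) (f := fun _ => (1 : ℝ)) (g := f)
    (fun _ _ => zero_le_one) h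
  simpa using this

noncomputable def DD (k : ℕ) (g : ℕ → ℝ) : ℝ :=
  ∏ j ∈ Finset.range (k + 1), ∏ i ∈ Finset.range j,
    (1 + (∑ t ∈ Finset.Ico i j, g t) / ((j : ℝ) - i))

noncomputable def LL (k : ℕ) (g : ℕ → ℝ) : ℝ :=
  ∏ j ∈ Finset.range (k + 1), (1 + (∑ t ∈ Finset.range (j + 1), g t) / ((j : ℝ) + 1))

noncomputable def RR (k : ℕ) (g : ℕ → ℝ) : ℝ :=
  ∏ j ∈ Finset.range (k + 1), (1 + (∑ t ∈ Finset.Ico (k - j) (k + 1), g t) / ((j : ℝ) + 1))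

noncomputable def qq (n : ℕ) (x : ℝ) : ℝ := ∏ j ∈ Finset.range n, (1 + x / ((j : ℝ) + 1))

theorem DD_right (k : ℕ) (g : ℕ → ℝ) : DD (k + 1) g = DD k g * RR k g := by
  unfold DD RR
  rw [Finset.prod_range_succ]
  congr 1
  rw [← Finset.prod_range_reflect]
  apply Finset.prod_congr rfl
  intro j hj
  have hj' : j ≤ k := by simpa [Nat.lt_succ_iff] using hj
  have h1 : k + 1 - 1 - j = k - j := by omega
  rw [h1]
  congr 2
  push_cast [Nat.cast_sub hj']
  ring

theorem DD_left (k : ℕ) (g : ℕ → ℝ) :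
    DD (k + 1) g = DD k (fun t => g (t + 1)) * LL k g := by
  unfold DD LL
  rw [Finset.prod_range_succ']
  simp only [Finset.range_zero, Finset.prod_empty, mul_one]
  rw [← Finset.prod_mul_distrib]
  apply Finset.prod_congr rfl
  intro j _
  rw [Finset.prod_range_succ']
  congr 1
  · apply Finset.prod_congr rfl
    intro i _
    rw [Finset.sum_Ico_add' g i j 1]
    push_cast
    congr 2
    ring
  · simp

theorem DD_congr (k : ℕ) (g h : ℕ → ℝ) (H : ∀ t < k, g t = h t) : DD k g = DD k h := by
  unfold DD
  apply Finset.prod_congr rfl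
  intro j hj
  apply Finset.prod_congr rfl
  intro i hi
  congr 2
  apply Finset.sum_congr rfl
  intro t ht
  simp at hj ht
  exact H t (by omega)

theorem prod_tele (n m : ℕ) (s : ℕ → ℝ) (h0 : ∀ j < n, 0 ≤ s j) (h1 : ∀ j < n, m ≤ j → 1 ≤ s j)
    (hm : m ≤ n) : ((n : ℝ) + 1) / (m + 1) ≤ ∏ j ∈ Finset.range n, (1 + s j / ((j : ℝ) + 1)) := by
  induction n with
  | zero =>
    have : m = 0 := by omega
    subst this; simp
  | succ n ih =>
    rw [Finset.prod_range_succ]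
    have hs0 := h0 n (by omega)
    rcases Nat.lt_or_ge n m with h | h
    · have : m = n + 1 := by omega
      subst this
      rw [div_self (by positivity)]
      have : (1 : ℝ) ≤ ∏ j ∈ Finset.range n, (1 + s j / ((j : ℝ) + 1)) := by
        apply one_le_prod_aux
        intro i hi
        have := h0 i (by simp at hi; omega)
        have : 0 ≤ s i / ((i : ℝ) + 1) := by positivity
        linarith
      have h3 : 0 ≤ s n / ((n : ℝ) + 1) := by positivity
      nlinarith
    · have hs1 := h1 n (by omega) h
      have := ih (fun j hj => h0 j (by omega)) (fun j hj => h1 j (by omega)) h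
      calc _ = ((n : ℝ) + 1) / (m + 1) * (1 + 1 / ((n : ℝ) + 1)) := by push_cast; field_simp
        _ ≤ _ := by
          have : 0 ≤ ∏ j ∈ Finset.range n, (1 + s j / ((j : ℝ) + 1)) := le_trans (by positivity) this
          gcongr

theorem prod_mono' (n : ℕ) (x : ℝ) (s : ℕ → ℝ) (hx : 0 ≤ x) (h1 : ∀ j < n, x ≤ s j) :
    qq n x ≤ ∏ j ∈ Finset.range n, (1 + s j / ((j : ℝ) + 1)) := by
  unfold qq
  apply Finset.prod_le_prod
  · intros; positivity
  · intro i hi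
    have := h1 i (by simpa using hi)
    gcongr

theorem one_le_qq (n : ℕ) (x : ℝ) (hx : 0 ≤ x) : 1 ≤ qq n x := by
  apply one_le_prod_aux
  intro i hi
  have : 0 ≤ x / ((i : ℝ) + 1) := by positivity
  linarith

theorem qq1 (n : ℕ) (hn : 2 ≤ n) (x : ℝ) (hx : 1 ≤ x) :
    (1 + x) * (2 + x) * (n + 1) / 6 ≤ qq n x := by
  induction n, hn using Nat.le_induction with
  | base => simp [qq, Finset.prod_range_succ]; apply le_of_eq; ring
  | succ n hn ih =>
    unfold qq at *
    rw [Finset.prod_range_succ]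
    calc _ = (1 + x) * (2 + x) * (n + 1) / 6 * (1 + 1 / ((n : ℝ) + 1)) := by
          push_cast; field_simp
      _ ≤ _ := by gcongr

theorem qq2 (n : ℕ) (hn : 2 ≤ n) (x : ℝ) (hx : 2 ≤ x) :
    (1 + x) * (2 + x) * ((n + 1) * (n + 2)) / 24 ≤ qq n x := by
  induction n, hn using Nat.le_induction with
  | base => simp [qq, Finset.prod_range_succ]; apply le_of_eq; ring
  | succ n hn ih =>
    unfold qq at *
    rw [Finset.prod_range_succ]
    calc _ = (1 + x) * (2 + x) * ((n + 1) * (n + 2)) / 24 * (1 + 2 / ((n : ℝ) + 1)) := by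
          push_cast; field_simp; ring
      _ ≤ _ := by gcongr

noncomputable def vv (x : ℕ) : ℝ := 24 / ((1 + x) * (2 + x))

theorem vv_pos (x : ℕ) : 0 < vv x := by unfold vv; positivity

theorem qv1 (k n : ℕ) (hk : 1 ≤ k) (hn : k + 1 ≤ n) (x : ℕ) (hx : 1 ≤ x) :
    (qq n x)⁻¹ ≤ vv x * (1 / (k + 2)) := by
  have h := qq1 n (by omega) x (by exact_mod_cast hx)
  have hn' : (k : ℝ) + 1 ≤ n := by exact_mod_cast hn
  have h2 : (1 + (x : ℝ)) * (2 + x) * (k + 2) / 24 ≤ qq n x := by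
    refine le_trans ?_ h
    have : (1 + (x : ℝ)) * (2 + x) * (k + 2) ≤ (1 + (x : ℝ)) * (2 + x) * (n + 1) := by
      apply mul_le_mul_of_nonneg_left _ (by positivity); linarith
    have : 0 ≤ (1 + (x : ℝ)) * (2 + x) * (k + 2) := by positivity
    linarith
  calc (qq n x)⁻¹ ≤ ((1 + (x : ℝ)) * (2 + x) * (k + 2) / 24)⁻¹ := by gcongr
    _ = _ := by unfold vv; field_simp

theorem qv2 (k n : ℕ) (hk : 1 ≤ k) (hn : k + 1 ≤ n) (x : ℕ) (hx : 2 ≤ x) :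
    (qq n x)⁻¹ ≤ vv x * (1 / (k + 2)) ^ 2 := by
  have h := qq2 n (by omega) x (by exact_mod_cast hx)
  have hn' : (k : ℝ) + 1 ≤ n := by exact_mod_cast hn
  have h2 : (1 + (x : ℝ)) * (2 + x) * (k + 2) ^ 2 / 24 ≤ qq n x := by
    refine le_trans ?_ h
    rw [pow_two]
    have : ((k : ℝ) + 2) * (k + 2) ≤ (n + 1) * (n + 2) := by nlinarith
    gcongr
  calc (qq n x)⁻¹ ≤ ((1 + (x : ℝ)) * (2 + x) * (k + 2) ^ 2 / 24)⁻¹ := by gcongr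
    _ = _ := by unfold vv; field_simp

theorem eps_le (k : ℕ) : 1 / ((k : ℝ) + 2) ≤ 1 := by
  rw [div_le_one (by positivity)]; linarith [Nat.cast_nonneg (α := ℝ) k]

theorem qv0 (k n : ℕ) (hk : 1 ≤ k) (hn : k + 1 ≤ n) (x : ℕ) : (qq n x)⁻¹ ≤ vv x := by
  rcases Nat.eq_zero_or_pos x with h | h
  · subst h
    have := one_le_qq n ((0 : ℕ) : ℝ) (by simp)
    refine (inv_le_one_of_one_le₀ this).trans ?_
    unfold vv; norm_num
  · refine (qv1 k n hk hn x h).trans ?_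
    have := vv_pos x
    have := eps_le k
    nlinarith

theorem LL_ge_q (k : ℕ) (g : ℕ → ℝ) (hg : ∀ t, 0 ≤ g t) : qq (k + 1) (g 0) ≤ LL k g := by
  apply prod_mono' _ _ _ (hg 0)
  intro j hj
  exact Finset.single_le_sum (fun i _ => hg i) (by simp)

theorem RR_ge_q (k : ℕ) (g : ℕ → ℝ) (hg : ∀ t, 0 ≤ g t) : qq (k + 1) (g k) ≤ RR k g := by
  apply prod_mono' _ _ _ (hg k)
  intro j hj
  exact Finset.single_le_sum (fun i _ => hg i) (by simp)

theorem LL_ge (k m : ℕ) (hm : m ≤ k) (g : ℕ → ℝ) (hg : ∀ t, 0 ≤ g t) (h1 : 1 ≤ g m) :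
    ((k : ℝ) + 2) / (m + 1) ≤ LL k g := by
  have := prod_tele (k + 1) m (fun j => ∑ t ∈ Finset.range (j + 1), g t)
    (fun j _ => Finset.sum_nonneg fun i _ => hg i)
    (fun j _ h => h1.trans (Finset.single_le_sum (f := g) (fun i _ => hg i)
      (by simp; omega))) (by omega)
  refine le_trans (le_of_eq ?_) this
  push_cast; ring

theorem RR_ge (k m : ℕ) (hm : m ≤ k) (g : ℕ → ℝ) (hg : ∀ t, 0 ≤ g t) (h1 : 1 ≤ g m) :
    ((k : ℝ) + 2) / (k - m + 1) ≤ RR k g := by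
  have := prod_tele (k + 1) (k - m) (fun j => ∑ t ∈ Finset.Ico (k - j) (k + 1), g t)
    (fun j _ => Finset.sum_nonneg fun i _ => hg i)
    (fun j _ h => h1.trans (Finset.single_le_sum (f := g) (fun i _ => hg i)
      (by simp; omega))) (by omega)
  refine le_trans (le_of_eq ?_) this
  push_cast [Nat.cast_sub hm]; ring

theorem one_le_LL (k : ℕ) (g : ℕ → ℝ) (hg : ∀ t, 0 ≤ g t) : 1 ≤ LL k g :=
  (one_le_qq _ _ (hg 0)).trans (LL_ge_q k g hg)

theorem one_le_RR (k : ℕ) (g : ℕ → ℝ) (hg : ∀ t, 0 ≤ g t) : 1 ≤ RR k g :=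
  (one_le_qq _ _ (hg k)).trans (RR_ge_q k g hg)

theorem one_le_DD (k : ℕ) (g : ℕ → ℝ) (hg : ∀ t, 0 ≤ g t) : 1 ≤ DD k g := by
  induction k with
  | zero => simp [DD]
  | succ k ih =>
    rw [DD_right]
    exact one_le_mul_of_one_le_of_one_le ih (one_le_RR k g hg)

/-- extension by zero -/
def EE {k : ℕ} (b : Fin k → ℕ) (t : ℕ) : ℝ := if h : t < k then (b ⟨t, h⟩ : ℝ) else 0

theorem EE_nonneg {k : ℕ} (b : Fin k → ℕ) (t : ℕ) : 0 ≤ EE b t := by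
  unfold EE; split <;> positivity

noncomputable def WW {k : ℕ} (b : Fin k → ℕ) : ℝ := (DD k (EE b))⁻¹

theorem DD_pos {k : ℕ} (b : Fin k → ℕ) : 0 < DD k (EE b) :=
  lt_of_lt_of_le one_pos (one_le_DD k _ (EE_nonneg b))

theorem WW_pos {k : ℕ} (b : Fin k → ℕ) : 0 < WW b := inv_pos.2 (DD_pos b)

theorem WW_le_one {k : ℕ} (b : Fin k → ℕ) : WW b ≤ 1 :=
  inv_le_one_of_one_le₀ (one_le_DD k _ (EE_nonneg b))

def mid {k : ℕ} (b : Fin (k + 2) → ℕ) : Fin k → ℕ := fun t => b t.succ.castSucc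

def st0 (k : ℕ) : Fin k → ℕ := fun i => if i.val = 0 then 1 else 0
def st1 (k : ℕ) : Fin k → ℕ := fun i => if i.val + 1 = k then 1 else 0

def Bad {k : ℕ} (b : Fin k → ℕ) : Prop := b = 0 ∨ b = st0 k ∨ b = st1 k

theorem ext_mid {k : ℕ} (b c : Fin (k + 2) → ℕ) (h0 : b 0 = c 0)
    (h1 : b (Fin.last _) = c (Fin.last _)) (h2 : mid b = mid c) : b = c := by
  funext i
  induction i using Fin.lastCases with
  | last => exact h1
  | cast i =>
    induction i using Fin.cases with
    | zero => exact h0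
    | succ i => exact congrFun h2 i

theorem DD_split {k : ℕ} (b : Fin (k + 2) → ℕ) :
    DD (k + 2) (EE b) = DD k (EE (mid b)) * RR k (fun t => EE b (t + 1)) * LL (k + 1) (EE b) := by
  rw [DD_left, DD_right]
  congr 2
  apply DD_congr
  intro t ht
  simp [EE, mid, ht, show t + 1 < k + 2 by omega]

theorem EE_zero' {k : ℕ} (b : Fin (k + 2) → ℕ) : EE b 0 = (b 0 : ℝ) := by simp [EE]
theorem EE_last' {k : ℕ} (b : Fin (k + 2) → ℕ) : EE b (k + 1) = (b (Fin.last _) : ℝ) := by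
  simp [EE, Fin.last]

theorem WW_split {k : ℕ} (b : Fin (k + 2) → ℕ) :
    WW b ≤ WW (mid b) * (qq (k + 1) (b (Fin.last _)))⁻¹ * (qq (k + 2) (b 0))⁻¹ := by
  unfold WW
  rw [DD_split, ← mul_inv, ← mul_inv]
  have h1 := RR_ge_q k (fun t => EE b (t + 1)) (fun t => EE_nonneg _ _)
  have h2 := LL_ge_q (k + 1) (EE b) (EE_nonneg _)
  rw [EE_zero'] at h2
  simp only [EE_last'] at h1
  have h3 := DD_pos (mid b)
  have h4 := one_le_qq (k + 1) (b (Fin.last _)) (by positivity)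
  have h5 := one_le_qq (k + 2) (b 0) (by positivity)
  have h6 := one_le_RR k (fun t => EE b (t + 1)) (fun t => EE_nonneg _ _)
  have h7 : 0 ≤ DD k (EE (mid b)) * RR k fun t => EE b (t + 1) := by positivity
  gcongr

theorem WW_mid {k : ℕ} (b : Fin (k + 2) → ℕ) (m : Fin k) (hm : 1 ≤ mid b m) :
    WW b ≤ WW (mid b) * (((m : ℝ) + 2) * (k + 1 - m) / ((k + 3) * (k + 2))) := by
  have e1 : (1 : ℝ) ≤ EE b (m + 1) := by
    have : (m : ℕ) + 1 < k + 2 := by omega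
    simp only [EE, this, dif_pos]
    exact_mod_cast hm
  have h1 := RR_ge k m (by omega) (fun t => EE b (t + 1)) (fun t => EE_nonneg _ _) e1
  have h2 := LL_ge (k + 1) (m + 1) (by omega) (EE b) (EE_nonneg _) e1
  have h3 := DD_pos (mid b)
  have hk : (m : ℝ) + 1 ≤ k := by exact_mod_cast m.2
  push_cast at h2
  have h6 : (0 : ℝ) < k - m + 1 := by linarith
  have h8 := one_le_RR k (fun t => EE b (t + 1)) (fun t => EE_nonneg _ _)
  have h7 : 0 ≤ DD k (EE (mid b)) * RR k fun t => EE b (t + 1) := by positivity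
  unfold WW
  rw [DD_split]
  calc _ ≤ (DD k (EE (mid b)) * (((k : ℝ) + 2) / (k - m + 1)) * ((k + 1 + 2) / (m + 1 + 1)))⁻¹ := by
        gcongr
    _ = _ := by
      field_simp
      ring

theorem WW_st {k : ℕ} (hk : 1 ≤ k) (c : Fin k → ℕ) (hc : c = st0 k ∨ c = st1 k) :
    WW c ≤ 1 / (k + 1) := by
  obtain ⟨k, rfl⟩ : ∃ l, k = l + 1 := ⟨k - 1, by omega⟩
  have key : (k : ℝ) + 2 ≤ DD (k + 1) (EE c) := by
    rcases hc with rfl | rfl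
    · rw [DD_left]
      have := LL_ge k 0 (by omega) (EE (st0 (k + 1))) (EE_nonneg _) (by simp [EE, st0])
      have h2 := one_le_DD k (fun t => EE (st0 (k + 1)) (t + 1)) (fun t => EE_nonneg _ _)
      simp at this
      nlinarith
    · rw [DD_right]
      have := RR_ge k k (by omega) (EE (st1 (k + 1))) (EE_nonneg _) (by simp [EE, st1])
      have h2 := one_le_DD k (EE (st1 (k + 1))) (fun t => EE_nonneg _ _)
      simp at this
      nlinarith
  unfold WW
  rw [← one_div]
  apply one_div_le_one_div_of_le (by positivity)
  push_cast; linarith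

open scoped ENNReal

open Classical in
noncomputable def U1 {k : ℕ} (c : Fin k → ℕ) : ℝ :=
  if c = 0 then (1 / ((k : ℝ) + 2)) ^ 2 else WW c * (1 / ((k : ℝ) + 2))

open Classical in
noncomputable def U2 {k : ℕ} (c : Fin k → ℕ) : ℝ :=
  if c = 0 then 0 else if Bad c then 2 * (1 / ((k : ℝ) + 2)) ^ 2 else WW c / 3

open Classical in
noncomputable def nb {k : ℕ} (c : Fin k → ℕ) : ℝ := if Bad c then 0 else WW c

theorem nb_nonneg {k : ℕ} (c : Fin k → ℕ) : 0 ≤ nb c := by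
  unfold nb; split
  · exact le_rfl
  · exact (WW_pos c).le

theorem U1_nonneg {k : ℕ} (c : Fin k → ℕ) : 0 ≤ U1 c := by
  have := WW_pos c
  unfold U1; split <;> positivity

theorem U2_nonneg {k : ℕ} (c : Fin k → ℕ) : 0 ≤ U2 c := by
  have := WW_pos c
  unfold U2; split
  · exact le_rfl
  · split <;> positivity

theorem mid_zero (k : ℕ) : mid (0 : Fin (k + 2) → ℕ) = 0 := rfl
theorem mid_st0 (k : ℕ) : mid (st0 (k + 2)) = 0 := by
  funext i; simp [mid, st0]
theorem mid_st1 (k : ℕ) : mid (st1 (k + 2)) = 0 := by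
  funext i
  have := i.2
  simp [mid, st1]; omega

theorem WW_main {k : ℕ} (hk : 1 ≤ k) (b : Fin (k + 2) → ℕ) (hb : ¬ Bad b) :
    WW b ≤ vv (b 0) * (vv (b (Fin.last _)) * U1 (mid b)) +
      (if b 0 = 0 ∧ b (Fin.last _) = 0 then U2 (mid b) else 0) := by
  have hv1 := vv_pos (b 0)
  have hv2 := vv_pos (b (Fin.last _))
  have hU1 := U1_nonneg (mid b)
  have hW := WW_pos (mid b)
  have hW1 := WW_le_one (mid b)
  have hsp := WW_split b
  have hx0 := qv0 k (k + 2) hk (by omega) (b 0)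
  have hy0 := qv0 k (k + 1) hk (by omega) (b (Fin.last _))
  have hqx : 0 ≤ (qq (k + 2) (b 0))⁻¹ :=
    inv_nonneg.2 (zero_le_one.trans (one_le_qq _ _ (by positivity)))
  have hqy : 0 ≤ (qq (k + 1) (b (Fin.last _)))⁻¹ :=
    inv_nonneg.2 (zero_le_one.trans (one_le_qq _ _ (by positivity)))
  have hε0 : 0 < 1 / ((k : ℝ) + 2) := by positivity
  by_cases h00 : b 0 = 0 ∧ b (Fin.last _) = 0
  · rw [if_pos h00]
    have hne : mid b ≠ 0 := by
      intro h
      exact hb (Or.inl (ext_mid _ _ h00.1 h00.2 h))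
    have : WW b ≤ U2 (mid b) := by
      unfold U2
      rw [if_neg hne]
      have aux : ∀ m : Fin k, 1 ≤ mid b m → ((m : ℕ) = 0 ∨ (m : ℕ) + 1 = k) →
          WW (mid b) ≤ 1 / (k + 1) → WW b ≤ 2 * (1 / ((k : ℝ) + 2)) ^ 2 := by
        intro m hm hm2 hw
        refine (WW_mid b m hm).trans ?_
        have e : ((m : ℝ) + 2) * (k + 1 - m) = 2 * (k + 1) := by
          rcases hm2 with h | h
          · rw [h]; push_cast; ring
          · have h' : (k : ℝ) = m + 1 := by exact_mod_cast h.symm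
            rw [h']; ring
        rw [e]
        calc _ ≤ 1 / ((k : ℝ) + 1) * (2 * (k + 1) / ((k + 3) * (k + 2))) := by gcongr
          _ = 2 * (1 / ((k + 3) * (k + 2))) := by field_simp
          _ ≤ 2 * (1 / ((k + 2) * (k + 2))) := by gcongr; linarith
          _ = _ := by field_simp
      split
      · rename_i hbad
        rcases hbad with h | h | h
        · exact absurd h hne
        · exact aux ⟨0, by omega⟩ (by rw [h]; simp [st0]) (Or.inl rfl) (WW_st hk _ (Or.inl h))
        · exact aux ⟨k - 1, by omega⟩ (by rw [h]; simp only [st1]; rw [if_pos (by omega)]) (Or.inr (by simp; omega))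
            (WW_st hk _ (Or.inr h))
      · obtain ⟨m, hm⟩ := Function.ne_iff.1 hne
        refine (WW_mid b m (Nat.one_le_iff_ne_zero.2 hm)).trans ?_
        rw [div_eq_mul_one_div (WW (mid b)) 3]
        apply mul_le_mul_of_nonneg_left _ hW.le
        rw [div_le_div_iff₀ (by positivity) (by positivity)]
        have hk' : (1 : ℝ) ≤ k := by exact_mod_cast hk
        nlinarith [sq_nonneg ((m : ℝ) + 2 - (k + 1 - m))]
    have h3 : 0 ≤ vv (b 0) * (vv (b (Fin.last _)) * U1 (mid b)) := by positivity
    linarith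
  · rw [if_neg h00, add_zero]
    refine hsp.trans ?_
    by_cases hc : mid b = 0
    · unfold U1
      rw [if_pos hc]
      have key : (qq (k + 1) (b (Fin.last _)))⁻¹ * (qq (k + 2) (b 0))⁻¹ ≤
          vv (b (Fin.last _)) * vv (b 0) * (1 / ((k : ℝ) + 2)) ^ 2 := by
        by_cases hx2 : 2 ≤ b 0
        · calc _ ≤ vv (b (Fin.last _)) * (vv (b 0) * (1 / ((k : ℝ) + 2)) ^ 2) :=
                mul_le_mul hy0 (qv2 k _ hk (by omega) _ hx2) hqx hv2.le
            _ = _ := by ring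
        by_cases hy2 : 2 ≤ b (Fin.last _)
        · calc _ ≤ vv (b (Fin.last _)) * (1 / ((k : ℝ) + 2)) ^ 2 * vv (b 0) :=
                mul_le_mul (qv2 k _ hk (by omega) _ hy2) hx0 hqx (by positivity)
            _ = _ := by ring
        have h1 : b 0 ≠ 0 := by
          intro h
          apply hb; right; right
          have : b (Fin.last _) = 1 := by
            have : b (Fin.last _) ≠ 0 := fun h' => h00 ⟨h, h'⟩
            omega
          exact ext_mid _ _ (by rw [h]; simp [st1]) (by rw [this]; simp [st1])
            (by rw [hc, mid_st1])
        have h2 : b (Fin.last _) ≠ 0 := by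
          intro h
          apply hb; right; left
          have : b 0 = 1 := by omega
          exact ext_mid _ _ (by rw [this]; simp [st0]) (by rw [h]; simp [st0])
            (by rw [hc, mid_st0])
        calc _ ≤ vv (b (Fin.last _)) * (1 / ((k : ℝ) + 2)) * (vv (b 0) * (1 / ((k : ℝ) + 2))) :=
                mul_le_mul (qv1 k _ hk (by omega) _ (by omega))
                  (qv1 k _ hk (by omega) _ (by omega)) hqx (by positivity)
            _ = _ := by ring
      rw [mul_assoc]
      calc _ ≤ 1 * ((qq (k + 1) (b (Fin.last _)))⁻¹ * (qq (k + 2) (b 0))⁻¹) := by gcongr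
        _ ≤ vv (b (Fin.last _)) * vv (b 0) * (1 / ((k : ℝ) + 2)) ^ 2 := by rw [one_mul]; exact key
        _ = _ := by ring
    · unfold U1
      rw [if_neg hc]
      have key : (qq (k + 1) (b (Fin.last _)))⁻¹ * (qq (k + 2) (b 0))⁻¹ ≤
          vv (b (Fin.last _)) * vv (b 0) * (1 / ((k : ℝ) + 2)) := by
        by_cases hx : b 0 = 0
        · have : b (Fin.last _) ≠ 0 := fun h' => h00 ⟨hx, h'⟩
          calc _ ≤ vv (b (Fin.last _)) * (1 / ((k : ℝ) + 2)) * vv (b 0) :=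
                mul_le_mul (qv1 k _ hk (by omega) _ (by omega)) hx0 hqx (by positivity)
            _ = _ := by ring
        · calc _ ≤ vv (b (Fin.last _)) * (vv (b 0) * (1 / ((k : ℝ) + 2))) :=
                mul_le_mul hy0 (qv1 k _ hk (by omega) _ (by omega)) hqx hv2.le
            _ = _ := by ring
      rw [mul_assoc]
      calc _ ≤ WW (mid b) * (vv (b (Fin.last _)) * vv (b 0) * (1 / ((k : ℝ) + 2))) := by gcongr
        _ = _ := by ring

def trip {k : ℕ} (b : Fin (k + 2) → ℕ) : ℕ × ℕ × (Fin k → ℕ) := (b 0, b (Fin.last _), mid b)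

theorem trip_inj (k : ℕ) : Function.Injective (trip (k := k)) := by
  intro b c h
  simp only [trip, Prod.mk.injEq] at h
  exact ext_mid _ _ h.1 h.2.1 h.2.2

noncomputable def uu (k : ℕ) : ℝ≥0∞ := ∑' b : Fin k → ℕ, ENNReal.ofReal (nb b)
noncomputable def zz (k : ℕ) : ℝ≥0∞ := ∑' b : Fin k → ℕ, ENNReal.ofReal (WW b)
noncomputable def VV : ℝ≥0∞ := ∑' x : ℕ, ENNReal.ofReal (vv x)

theorem trip_sum {k : ℕ} (F : (Fin (k + 2) → ℕ) → ℝ≥0∞) (H : ℕ × ℕ × (Fin k → ℕ) → ℝ≥0∞)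
    (h : ∀ b, F b ≤ H (trip b)) : ∑' b, F b ≤ ∑' x, ∑' y, ∑' c, H (x, y, c) := by
  calc _ ≤ ∑' b, H (trip b) := ENNReal.tsum_le_tsum h
    _ ≤ ∑' p, H p := ENNReal.tsum_comp_le_tsum_of_injective (trip_inj k) H
    _ = _ := by
      rw [ENNReal.tsum_prod']
      congr 1; funext x
      rw [ENNReal.tsum_prod']

theorem zz_rec {k : ℕ} (hk : 1 ≤ k) : zz (k + 2) ≤ VV * (VV * zz k) := by
  unfold zz VV
  refine (trip_sum _ (fun p => ENNReal.ofReal (vv p.1) * (ENNReal.ofReal (vv p.2.1) *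
    ENNReal.ofReal (WW p.2.2))) ?_).trans ?_
  · intro b
    rw [← ENNReal.ofReal_mul (vv_pos _).le, ← ENNReal.ofReal_mul (vv_pos _).le]
    apply ENNReal.ofReal_le_ofReal
    refine (WW_split b).trans ?_
    have hx0 := qv0 k (k + 2) hk (by omega) (b 0)
    have hy0 := qv0 k (k + 1) hk (by omega) (b (Fin.last _))
    have hW := WW_pos (mid b)
    have hqx : 0 ≤ (qq (k + 2) (b 0))⁻¹ :=
      inv_nonneg.2 (zero_le_one.trans (one_le_qq _ _ (by positivity)))
    have hv := vv_pos (b (Fin.last _))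
    simp only [trip]
    calc _ ≤ WW (mid b) * vv (b (Fin.last _)) * vv (b 0) := by gcongr
      _ = _ := by ring
  · simp only [ENNReal.tsum_mul_left, ENNReal.tsum_mul_right]
    exact le_rfl

theorem uu_rec0 {k : ℕ} (hk : 1 ≤ k) : uu (k + 2) ≤
    VV * (VV * ∑' c : Fin k → ℕ, ENNReal.ofReal (U1 c)) + ∑' c : Fin k → ℕ, ENNReal.ofReal (U2 c) := by
  unfold uu VV
  refine (trip_sum _ (fun p => ENNReal.ofReal (vv p.1) * (ENNReal.ofReal (vv p.2.1) *
    ENNReal.ofReal (U1 p.2.2)) + if p.1 = 0 then if p.2.1 = 0 then ENNReal.ofReal (U2 p.2.2)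
      else 0 else 0) ?_).trans ?_
  · intro b
    by_cases hb : Bad b
    · simp [nb, hb]
    · unfold nb
      rw [if_neg hb]
      refine (ENNReal.ofReal_le_ofReal (WW_main hk b hb)).trans ?_
      refine ENNReal.ofReal_add_le.trans ?_
      simp only [trip]
      rw [ENNReal.ofReal_mul (vv_pos _).le, ENNReal.ofReal_mul (vv_pos _).le]
      gcongr
      by_cases h1 : b 0 = 0 <;> by_cases h2 : b (Fin.last _) = 0 <;> simp [h1, h2]
  · simp only [ENNReal.tsum_add, ENNReal.tsum_mul_left, ENNReal.tsum_mul_right]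
    gcongr
    have e : ∀ x y : ℕ, (∑' c : Fin k → ℕ, if x = 0 then if y = 0 then ENNReal.ofReal (U2 c)
      else 0 else 0) = if x = 0 then if y = 0 then ∑' c : Fin k → ℕ, ENNReal.ofReal (U2 c) else 0 else 0 := by
      intro x y
      by_cases hx : x = 0 <;> by_cases hy : y = 0 <;> simp [hx, hy]
    simp only [e]
    have e2 : ∀ x : ℕ, (∑' y : ℕ, if x = 0 then if y = 0 then ∑' c : Fin k → ℕ, ENNReal.ofReal (U2 c)
      else 0 else 0) = if x = 0 then ∑' c : Fin k → ℕ, ENNReal.ofReal (U2 c) else 0 := by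
      intro x
      by_cases hx : x = 0
      · simp only [hx, if_true]; rw [tsum_ite_eq]
      · simp [hx]
    simp only [e2]
    rw [tsum_ite_eq]

open Classical in
theorem st_sum {k : ℕ} (d : Fin k → ℕ) (a : ℝ≥0∞) : ∑' c : Fin k → ℕ, (if c = d then a else 0) = a := by
  rw [tsum_ite_eq]

theorem sumU1 {k : ℕ} (hk : 1 ≤ k) : ∑' c : Fin k → ℕ, ENNReal.ofReal (U1 c) ≤
    5 * ENNReal.ofReal ((1 / ((k : ℝ) + 2)) ^ 2) + ENNReal.ofReal (1 / ((k : ℝ) + 2)) * uu k := by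
  classical
  set e := ENNReal.ofReal ((1 / ((k : ℝ) + 2)) ^ 2) with he
  have hst : ∀ c : Fin k → ℕ, c = st0 k ∨ c = st1 k → 
      ENNReal.ofReal (WW c * (1 / ((k : ℝ) + 2))) ≤ 2 * e := by
    intro c hc
    have h := WW_st hk c hc
    rw [he, ← ENNReal.ofReal_ofNat 2, ← ENNReal.ofReal_mul (by norm_num)]
    apply ENNReal.ofReal_le_ofReal
    have : 1 / ((k : ℝ) + 1) ≤ 2 * (1 / ((k : ℝ) + 2)) := by
      rw [mul_one_div, div_le_div_iff₀ (by positivity) (by positivity)]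
      have : (0 : ℝ) ≤ k := by positivity
      linarith
    calc _ ≤ 2 * (1 / ((k : ℝ) + 2)) * (1 / ((k : ℝ) + 2)) := by
          gcongr; exact h.trans this
      _ = _ := by ring
  calc _ ≤ ∑' c : Fin k → ℕ, ((if c = 0 then e else 0) + (if c = st0 k then 2 * e else 0) +
        (if c = st1 k then 2 * e else 0) + ENNReal.ofReal (1 / ((k : ℝ) + 2)) * ENNReal.ofReal (nb c)) := by
        apply ENNReal.tsum_le_tsum
        intro c
        unfold U1
        by_cases h0 : c = 0
        · simp only [h0, if_true]
          rw [add_assoc, add_assoc]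
          exact le_self_add
        rw [if_neg h0]
        by_cases h1 : c = st0 k
        · refine (hst c (Or.inl h1)).trans ?_
          rw [if_neg h0, if_pos h1, zero_add, add_assoc]
          exact le_self_add
        by_cases h2 : c = st1 k
        · refine (hst c (Or.inr h2)).trans ?_
          rw [if_neg h0, if_neg h1, if_pos h2, zero_add, zero_add]
          exact le_self_add
        · have : nb c = WW c := by unfold nb; rw [if_neg]; unfold Bad; tauto
          rw [this, mul_comm (WW c), ENNReal.ofReal_mul (by positivity)]
          exact le_add_self
    _ = _ := by
      simp only [ENNReal.tsum_add, ENNReal.tsum_mul_left, st_sum]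
      unfold uu
      ring

theorem sumU2 {k : ℕ} : ∑' c : Fin k → ℕ, ENNReal.ofReal (U2 c) ≤
    4 * ENNReal.ofReal ((1 / ((k : ℝ) + 2)) ^ 2) + ENNReal.ofReal (1 / 3) * uu k := by
  classical
  set e := ENNReal.ofReal ((1 / ((k : ℝ) + 2)) ^ 2) with he
  calc _ ≤ ∑' c : Fin k → ℕ, ((if c = st0 k then 2 * e else 0) +
        (if c = st1 k then 2 * e else 0) + ENNReal.ofReal (1 / 3) * ENNReal.ofReal (nb c)) := by
        apply ENNReal.tsum_le_tsum
        intro c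
        unfold U2
        by_cases h0 : c = 0
        · simp [h0]
        rw [if_neg h0]
        by_cases hb : Bad c
        · rw [if_pos hb]
          have : ENNReal.ofReal (2 * (1 / ((k : ℝ) + 2)) ^ 2) = 2 * e := by
            rw [he, ENNReal.ofReal_mul (by norm_num)]; simp
          rw [this]
          rcases hb with h | h | h
          · exact absurd h h0
          · rw [if_pos h, add_assoc]
            exact le_self_add
          · rw [if_pos h, add_assoc, add_comm _ (_ + _), add_assoc]
            exact le_self_add
        · have : nb c = WW c := by unfold nb; rw [if_neg hb]
          rw [if_neg hb, this, div_eq_mul_one_div, mul_comm (WW c), ENNReal.ofReal_mul (by positivity)]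
          exact le_add_self
    _ = _ := by
      simp only [ENNReal.tsum_add, ENNReal.tsum_mul_left, st_sum]
      unfold uu
      ring

theorem VV_ne_top : VV ≠ ⊤ := by
  unfold VV
  have h : Summable vv := by
    have h1 : Summable (fun n : ℕ => 24 * (1 / ((n + 1 : ℕ) : ℝ) ^ 2)) :=
      ((summable_nat_add_iff 1).2 (Real.summable_one_div_nat_pow.2 (by norm_num : 1 < 2))).mul_left 24
    refine Summable.of_nonneg_of_le (fun x => (vv_pos x).le) (fun x => ?_) h1
    unfold vv
    rw [mul_one_div]
    push_cast
    rw [pow_two]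
    have : ((x : ℝ) + 1) * (x + 1) ≤ (1 + x) * (2 + x) := by
      have : (0 : ℝ) ≤ x := by positivity
      nlinarith
    gcongr
  exact h.tsum_ofReal_ne_top

noncomputable def ss (x : ℕ) : ℝ := ((1 + (x : ℝ)) * √(1 + x))⁻¹
noncomputable def SS : ℝ≥0∞ := ∑' x : ℕ, ENNReal.ofReal (ss x)

theorem ss_pos (x : ℕ) : 0 < ss x := by unfold ss; positivity

theorem SS_ne_top : SS ≠ ⊤ := by
  unfold SS
  have h : Summable ss := by
    have h1 := ((summable_nat_add_iff 1).2 (Real.summable_one_div_nat_rpow.2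
      (by norm_num : (1 : ℝ) < 3 / 2)))
    refine h1.congr (fun x => ?_)
    unfold ss
    rw [one_div]
    congr 1
    rw [Real.sqrt_eq_rpow, show (3 / 2 : ℝ) = 1 + 1 / 2 by norm_num,
      Real.rpow_add (by positivity), Real.rpow_one]
    push_cast
    rw [add_comm (1 : ℝ)]
  exact h.tsum_ofReal_ne_top

theorem amgm (x y : ℝ) (hx : 0 ≤ x) (hy : 0 ≤ y) : √(1 + x) * √(1 + y) ≤ 1 + (x + y) / 2 := by
  have h1 := Real.sq_sqrt (show 0 ≤ 1 + x by linarith)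
  have h2 := Real.sq_sqrt (show 0 ≤ 1 + y by linarith)
  nlinarith [sq_nonneg (√(1 + x) - √(1 + y))]

theorem DD2 (g : ℕ → ℝ) : DD 2 g = (1 + g 0) * (1 + g 1) * (1 + (g 0 + g 1) / 2) := by
  simp only [DD, Finset.prod_range_succ, Finset.sum_Ico_eq_sum_range, Finset.sum_range_succ]
  norm_num [Finset.sum_range_succ]
  ring

theorem DD3 (g : ℕ → ℝ) : DD 3 g = (1 + g 0) * (1 + g 1) * (1 + g 2) *
    (1 + (g 0 + g 1) / 2) * (1 + (g 1 + g 2) / 2) * (1 + (g 0 + g 1 + g 2) / 3) := by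
  simp only [DD, Finset.prod_range_succ, Finset.sum_Ico_eq_sum_range, Finset.sum_range_succ]
  norm_num [Finset.sum_range_succ]
  ring

theorem zz2 : zz 2 ≠ ⊤ := by
  have : zz 2 ≤ SS * SS := by
    unfold zz SS
    refine (trip_sum (k := 0) _ (fun p => ENNReal.ofReal (ss p.1) * (ENNReal.ofReal (ss p.2.1) * 1)) ?_).trans ?_
    · intro b
      rw [mul_one, ← ENNReal.ofReal_mul (ss_pos _).le]
      apply ENNReal.ofReal_le_ofReal
      unfold WW ss
      rw [← mul_inv]
      simp only [trip]
      apply inv_anti₀ (by positivity)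
      have h := amgm (b 0) (b 1) (by positivity) (by positivity)
      have e : DD 2 (EE b) = (1 + (b 0 : ℝ)) * (1 + (b 1 : ℝ)) * (1 + ((b 0 : ℝ) + b 1) / 2) := by
        rw [DD2]; simp [EE]
      rw [e]
      have : Fin.last (0 + 1) = (1 : Fin 2) := rfl
      rw [this]
      calc _ = (1 + (b 0 : ℝ)) * (1 + (b 1 : ℝ)) * (√(1 + b 0) * √(1 + b 1)) := by ring
        _ ≤ _ := by gcongr
    · simp only [ENNReal.tsum_mul_left, ENNReal.tsum_mul_right]
      simp
  exact ne_top_of_le_ne_top (ENNReal.mul_ne_top SS_ne_top SS_ne_top) this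

theorem zz3 : zz 3 ≠ ⊤ := by
  have : zz 3 ≤ SS * (SS * SS) := by
    unfold zz SS
    refine (trip_sum (k := 1) _ (fun p => ENNReal.ofReal (ss p.1) * (ENNReal.ofReal (ss p.2.1) *
      ENNReal.ofReal (ss (p.2.2 0)))) ?_).trans ?_
    · intro b
      rw [← ENNReal.ofReal_mul (ss_pos _).le, ← ENNReal.ofReal_mul (ss_pos _).le]
      apply ENNReal.ofReal_le_ofReal
      unfold WW ss
      rw [← mul_inv, ← mul_inv]
      simp only [trip]
      apply inv_anti₀ (by positivity)
      have h := amgm (b 0) (b 1) (by positivity) (by positivity)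
      have h' := amgm (b 1) (b 2) (by positivity) (by positivity)
      have e : DD 3 (EE b) = (1 + (b 0 : ℝ)) * (1 + (b 1 : ℝ)) * (1 + (b 2 : ℝ)) *
          (1 + ((b 0 : ℝ) + b 1) / 2) * (1 + ((b 1 : ℝ) + b 2) / 2) *
          (1 + ((b 0 : ℝ) + b 1 + b 2) / 3) := by
        rw [DD3]; simp [EE]
      rw [e]
      have e1 : Fin.last (1 + 1) = (2 : Fin 3) := rfl
      have e2 : mid b 0 = b 1 := rfl
      rw [e1, e2]
      have h4 : 1 ≤ √(1 + (b 1 : ℝ)) := by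
        rw [Real.one_le_sqrt]; linarith [Nat.cast_nonneg (α := ℝ) (b 1)]
      have h5 : √(1 + (b 1 : ℝ)) ≤ √(1 + (b 1 : ℝ)) * √(1 + (b 1 : ℝ)) := by nlinarith
      calc _ = (1 + (b 0 : ℝ)) * (1 + (b 1 : ℝ)) * (1 + (b 2 : ℝ)) * √(1 + b 0) * √(1 + b 2) * √(1 + b 1) := by ring
        _ ≤ (1 + (b 0 : ℝ)) * (1 + (b 1 : ℝ)) * (1 + (b 2 : ℝ)) * √(1 + b 0) * √(1 + b 2) *
            (√(1 + b 1) * √(1 + b 1)) := by gcongr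
        _ = (1 + (b 0 : ℝ)) * (1 + (b 1 : ℝ)) * (1 + (b 2 : ℝ)) * (√(1 + b 0) * √(1 + b 1)) *
            (√(1 + b 1) * √(1 + b 2)) * 1 := by ring
        _ ≤ _ := by
          gcongr
          have : 0 ≤ ((b 0 : ℝ) + b 1 + b 2) / 3 := by positivity
          linarith
    · simp only [ENNReal.tsum_mul_left, ENNReal.tsum_mul_right]
      gcongr
      rw [← (Equiv.funUnique (Fin 1) ℕ).tsum_eq (fun x => ENNReal.ofReal (ss x))]
      rfl
  exact ne_top_of_le_ne_top (ENNReal.mul_ne_top SS_ne_top (ENNReal.mul_ne_top SS_ne_top SS_ne_top)) this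

theorem zz_fin (k : ℕ) : zz (k + 2) ≠ ⊤ := by
  induction k using Nat.strong_induction_on with
  | _ k ih =>
    match k with
    | 0 => exact zz2
    | 1 => exact zz3
    | k + 2 =>
      exact ne_top_of_le_ne_top (ENNReal.mul_ne_top VV_ne_top (ENNReal.mul_ne_top VV_ne_top
        (ih k (by omega)))) (zz_rec (by omega))

theorem uu_fin (k : ℕ) : uu (k + 2) ≠ ⊤ := by
  refine ne_top_of_le_ne_top (zz_fin k) (ENNReal.tsum_le_tsum fun b => ?_)
  apply ENNReal.ofReal_le_ofReal
  unfold nb; split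
  · exact (WW_pos _).le
  · exact le_rfl

theorem uu_rec (k : ℕ) : (uu (k + 4)).toReal ≤ (5 * VV.toReal ^ 2 + 4) * (1 / ((k : ℝ) + 4)) ^ 2 +
    (VV.toReal ^ 2 * (1 / ((k : ℝ) + 4)) + 1 / 3) * (uu (k + 2)).toReal := by
  have h := (uu_rec0 (k := k + 2) (by omega)).trans
    (add_le_add (mul_le_mul_right (mul_le_mul_right (sumU1 (k := k + 2) (by omega)) _) _) sumU2)
  have hc : (((k + 2 : ℕ) : ℝ) + 2) = (k : ℝ) + 4 := by push_cast; ring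
  rw [hc, ← ENNReal.ofReal_toReal VV_ne_top, ← ENNReal.ofReal_toReal (uu_fin k),
    ← ENNReal.ofReal_ofNat 5, ← ENNReal.ofReal_ofNat 4] at h
  have hV : 0 ≤ VV.toReal := ENNReal.toReal_nonneg
  have hu : 0 ≤ (uu (k + 2)).toReal := ENNReal.toReal_nonneg
  generalize VV.toReal = V at *
  generalize (uu (k + 2)).toReal = u at *
  repeat rw [← ENNReal.ofReal_mul (by positivity)] at h
  repeat rw [← ENNReal.ofReal_add (by positivity) (by positivity)] at h
  repeat rw [← ENNReal.ofReal_mul (by positivity)] at h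
  repeat rw [← ENNReal.ofReal_add (by positivity) (by positivity)] at h
  have h2 := ENNReal.toReal_le_of_le_ofReal (by positivity) h
  refine h2.trans (le_of_eq ?_)
  ring

theorem summ_aux (r : ℕ → ℝ) (hr : ∀ k, 0 ≤ r k) (V A : ℝ) 
    (h : ∀ k : ℕ, r (k + 2) ≤ A * (1 / ((k : ℝ) + 4)) ^ 2 + (V * (1 / ((k : ℝ) + 4)) + 1 / 3) * r k) :
    Summable r := by
  obtain ⟨K, hK⟩ := exists_nat_ge (3 * V)
  have hA : Summable (fun k : ℕ => |A| * (1 / ((k : ℝ) + 4)) ^ 2) := by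
    have h1 := ((summable_nat_add_iff 4).2 (Real.summable_one_div_nat_pow.2 (by norm_num : 1 < 2)))
    refine (h1.congr (fun x => ?_)).mul_left _
    push_cast; rw [div_pow, one_pow]
  rw [← summable_nat_add_iff K]
  have hA' := (summable_nat_add_iff K).2 hA
  have h2 : ∀ k, r (k + 2 + K) ≤ |A| * (1 / (((k + K : ℕ) : ℝ) + 4)) ^ 2 + 2 / 3 * r (k + K) := by
    intro k
    have := h (k + K)
    rw [show k + 2 + K = k + K + 2 by ring]
    refine this.trans ?_
    have h3 : V * (1 / (((k + K : ℕ) : ℝ) + 4)) ≤ 1 / 3 := by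
      rw [mul_one_div, div_le_div_iff₀ (by positivity) (by positivity)]
      push_cast
      have : (0 : ℝ) ≤ k := by positivity
      linarith
    have h4 := hr (k + K)
    have h5 := le_abs_self A
    gcongr
    linarith
  set C := ∑' k : ℕ, |A| * (1 / (((k + K : ℕ) : ℝ) + 4)) ^ 2 with hC
  apply summable_of_sum_range_le (c := 3 * (r (0 + K) + r (1 + K) + C)) (fun k => hr _)
  intro n
  have h3 : ∑ k ∈ Finset.range n, r (k + K) ≤ ∑ k ∈ Finset.range (n + 2), r (k + K) :=
    Finset.sum_le_sum_of_subset_of_nonneg (by simp) (fun _ _ _ => hr _)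
  rw [Finset.sum_range_succ', Finset.sum_range_succ'] at h3
  have h4 : ∑ k ∈ Finset.range n, r (k + 1 + 1 + K) ≤
      ∑ k ∈ Finset.range n, (|A| * (1 / (((k + K : ℕ) : ℝ) + 4)) ^ 2 + 2 / 3 * r (k + K)) :=
    Finset.sum_le_sum fun k _ => h2 k
  rw [Finset.sum_add_distrib, ← Finset.mul_sum (f := fun k => r (k + K))] at h4
  have h5 : ∑ k ∈ Finset.range n, |A| * (1 / (((k + K : ℕ) : ℝ) + 4)) ^ 2 ≤ C :=
    hA'.sum_le_tsum _ (fun _ _ => by positivity)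
  simp only [zero_add] at h3 ⊢
  linarith

theorem uu_sum : ∑' k : ℕ, uu (k + 2) ≠ ⊤ := by
  have h := summ_aux (fun k => (uu (k + 2)).toReal) (fun k => ENNReal.toReal_nonneg) _ _ uu_rec
  have h2 := h.tsum_ofReal_ne_top
  simpa only [ENNReal.ofReal_toReal (uu_fin _)] using h2

noncomputable def ff (p : Σ k : ℕ, Fin (k + 1) → ℕ) : ℝ≥0∞ :=
  if p.1 = 0 then 0 else ENNReal.ofReal (nb p.2)

theorem ff_sum : ∑' p, ff p ≠ ⊤ := by
  rw [ENNReal.tsum_sigma', tsum_eq_zero_add' ENNReal.summable]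
  simpa [ff, uu] using uu_sum

theorem PA_eq (k : ℕ) (a : Fin k → ℕ) (ha : ∀ i, 1 ≤ a i) :
    ((PA k a : ℚ) : ℝ) = DD k (EE (fun i => a i - 1)) := by
  unfold PA DD
  rw [Finset.prod_comm]
  push_cast
  apply Finset.prod_congr rfl
  intro j hj
  have hj' : j ≤ k := by simpa [Nat.lt_succ_iff] using hj
  have hf : (Finset.range (k + 1)).filter (fun i => i < j) = Finset.range j := by
    ext i; simp; omega
  rw [← hf, Finset.prod_filter]
  apply Finset.prod_congr rfl
  intro i _
  by_cases hij : i < j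
  · rw [if_pos hij, if_pos hij]
    have h1 : (∑ t ∈ Finset.Ico i j, ((if h : t < k then (a ⟨t, h⟩ : ℚ) else 0 : ℚ) : ℝ)) =
        ((j : ℝ) - i) + ∑ t ∈ Finset.Ico i j, EE (fun i => a i - 1) t := by
      have h2 : ((j : ℝ) - i) = ∑ t ∈ Finset.Ico i j, (1 : ℝ) := by
        simp [Nat.cast_sub hij.le]
      rw [h2, ← Finset.sum_add_distrib]
      apply Finset.sum_congr rfl
      intro t ht
      have ht' : t < k := by simp at ht; omega
      have := ha ⟨t, ht'⟩
      simp only [EE, ht', dif_pos]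
      push_cast [Nat.cast_sub this]
      ring
    have h3 : (0 : ℝ) < (j : ℝ) - i := by
      rw [sub_pos]; exact_mod_cast hij
    push_cast
    rw [h1]
    field_simp
  · simp [hij]

def TT (N : ℕ) : Set (Σ k : ℕ, Fin (k + 1) → ℕ) :=
  {q | q.2 ≠ 0 ∧ DD (q.1 + 1) (EE q.2) ≤ N}

theorem TT_cover : ∃ C : ℕ, ∀ N : ℕ, 1 ≤ N → ∃ S : Finset (Σ k : ℕ, Fin (k + 1) → ℕ),
    TT N ⊆ S ∧ S.card ≤ 4 * N + C := by
  classical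
  have ht := ENNReal.tendsto_tsum_compl_atTop_zero ff_sum
  obtain ⟨F, hF⟩ := ((ENNReal.tendsto_nhds_zero.1 ht) 1 one_pos).exists
  refine ⟨F.card, fun N hN => ?_⟩
  set f' : {p // p ∉ F} → ℝ≥0∞ := fun p => ff p with hf'
  obtain ⟨hfin, hcard⟩ := ENNReal.finset_card_const_le_le_of_tsum_le (a := f') (c := 1)
    ENNReal.one_ne_top hF (ε := (N : ℝ≥0∞)⁻¹) (by simp)
  set G := hfin.toFinset
  have hG : G.card ≤ N := by
    rw [one_div, inv_inv] at hcard
    exact_mod_cast hcard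
  refine ⟨(Finset.range N).image (fun x => ⟨0, fun _ => x⟩) ∪
    (Finset.range N).image (fun k => ⟨k, st0 (k + 1)⟩) ∪
    (Finset.range N).image (fun k => ⟨k, st1 (k + 1)⟩) ∪ F ∪ G.image Subtype.val, ?_, ?_⟩
  · rintro ⟨k, b⟩ ⟨hb0, hD⟩
    simp only at hb0 hD
    simp only [Finset.coe_union, Set.mem_union, Finset.mem_coe, Finset.mem_image, Finset.mem_range]
    have hst : b = st0 (k + 1) ∨ b = st1 (k + 1) → k < N := by
      intro h
      have h1 := WW_st (k := k + 1) (by omega) b h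
      unfold WW at h1
      rw [← one_div, one_div_le_one_div (DD_pos b) (by positivity)] at h1
      have : ((k + 1 : ℕ) : ℝ) + 1 ≤ N := h1.trans hD
      have : k + 1 + 1 ≤ N := by exact_mod_cast this
      omega
    by_cases hk : k = 0
    · subst hk
      left; left; left; left
      refine ⟨b 0, ?_, ?_⟩
      · have e : DD (0 + 1) (EE b) = 1 + (b 0 : ℝ) := by
          simp [DD, EE, Finset.prod_range_succ]
        rw [e] at hD
        have : 1 + b 0 ≤ N := by exact_mod_cast hD
        omega
      · congr 1
        funext i
        congr 1
        exact Subsingleton.elim (α := Fin 1) _ _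
    by_cases h0 : b = st0 (k + 1)
    · left; left; left; right
      exact ⟨k, hst (Or.inl h0), by rw [h0]⟩
    by_cases h1 : b = st1 (k + 1)
    · left; left; right
      exact ⟨k, hst (Or.inr h1), by rw [h1]⟩
    by_cases hFm : (⟨k, b⟩ : Σ k : ℕ, Fin (k + 1) → ℕ) ∈ F
    · left; right; exact hFm
    right
    refine ⟨⟨⟨k, b⟩, hFm⟩, ?_, rfl⟩
    simp only [G, Set.Finite.mem_toFinset, Set.mem_ofPred_eq, hf', ff, if_neg hk]
    have : nb b = WW b := by
      unfold nb; rw [if_neg]; unfold Bad; tauto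
    rw [this]
    unfold WW
    rw [ENNReal.ofReal_inv_of_pos (DD_pos b)]
    apply ENNReal.inv_le_inv.2
    rw [← ENNReal.ofReal_natCast]
    exact ENNReal.ofReal_le_ofReal hD
  · refine (Finset.card_union_le _ _).trans ?_
    have c1 : ∀ g : ℕ → (Σ k : ℕ, Fin (k + 1) → ℕ), ((Finset.range N).image g).card ≤ N := by
      intro g
      exact Finset.card_image_le.trans (by simp)
    have c2 : (G.image Subtype.val).card ≤ N := Finset.card_image_le.trans hG
    have c3 := Finset.card_union_le ((Finset.range N).image (fun x => (⟨0, fun _ => x⟩ : Σ k : ℕ, Fin (k + 1) → ℕ)) ∪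
      (Finset.range N).image (fun k => ⟨k, st0 (k + 1)⟩) ∪
      (Finset.range N).image (fun k => ⟨k, st1 (k + 1)⟩)) F
    have c4 := Finset.card_union_le ((Finset.range N).image (fun x => (⟨0, fun _ => x⟩ : Σ k : ℕ, Fin (k + 1) → ℕ)) ∪
      (Finset.range N).image (fun k => ⟨k, st0 (k + 1)⟩))
      ((Finset.range N).image (fun k => ⟨k, st1 (k + 1)⟩))
    have c5 := Finset.card_union_le ((Finset.range N).image (fun x => (⟨0, fun _ => x⟩ : Σ k : ℕ, Fin (k + 1) → ℕ)))
      ((Finset.range N).image (fun k => ⟨k, st0 (k + 1)⟩))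
    have d1 := c1 (fun x => ⟨0, fun _ => x⟩)
    have d2 := c1 (fun k => ⟨k, st0 (k + 1)⟩)
    have d3 := c1 (fun k => ⟨k, st1 (k + 1)⟩)
    omega

/-- For all sufficiently large `N`, `R_N(SL) ≤ 34 N − 27 √N`. -/
theorem sl_count_le_asymptotic :
    ∃ M : ℕ, ∀ N : ℕ, M ≤ N →
      (SLSet N).Finite ∧
      ((SLSet N).ncard : ℝ) ≤ 34 * N - 27 * Real.sqrt N := by
  obtain ⟨C, hC⟩ := TT_cover
  refine ⟨C + 1, fun N hN => ?_⟩
  obtain ⟨S, hS, hcard⟩ := hC N (by omega)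
  let φ : (Σ k : ℕ, Fin (k + 1) → ℕ) → (Σ k : ℕ, Fin (k + 1) → ℕ) :=
    fun p => ⟨p.1, fun i => p.2 i - 1⟩
  have hmaps : Set.MapsTo φ (SLSet N) (S : Set (Σ k : ℕ, Fin (k + 1) → ℕ)) := by
    rintro ⟨k, a⟩ ⟨h1, ⟨i, h2⟩, h3⟩
    apply hS
    refine ⟨?_, ?_⟩
    · intro h
      have := congrFun h i
      simp only [φ, Pi.zero_apply] at this
      simp only at h2
      omega
    · simp only [φ]
      rw [← PA_eq (k + 1) a h1]
      exact_mod_cast h3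
  have hinj : Set.InjOn φ (SLSet N) := by
    rintro ⟨k, a⟩ ⟨h1, -, -⟩ ⟨l, b⟩ ⟨h2, -, -⟩ h
    simp only [φ, Sigma.mk.injEq] at h
    obtain ⟨rfl, h⟩ := h
    have h := eq_of_heq h
    congr 1
    funext i
    have e := congrFun h i
    have e1 := h1 i
    have e2 := h2 i
    simp only at e e1 e2
    omega
  refine ⟨Set.Finite.of_injOn hmaps hinj S.finite_toSet, ?_⟩
  have h1 := Set.ncard_le_ncard_of_injOn φ hmaps hinj S.finite_toSet
  rw [Set.ncard_coe_finset] at h1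
  have h2 : (SLSet N).ncard ≤ 5 * N := by omega
  have h3 : ((SLSet N).ncard : ℝ) ≤ 5 * N := by exact_mod_cast h2
  have h4 : Real.sqrt N ≤ N := by
    rw [Real.sqrt_le_left (by positivity)]
    have : (1 : ℝ) ≤ N := by exact_mod_cast (by omega : 1 ≤ N)
    nlinarith
  have : (0 : ℝ) ≤ N := by positivity
  linarith
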